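/- For every n ≥ 3, in the lattice MON of monoid varieties one has the strict inequality (C_n ⊓ B) ⊔ Fv < (C_n ⊔ Fv) ⊓ B, where C_n = ⟪{(xⁿ,x^{n+1}),(xy,yx)}⟫, B = ⟪{(x²,x³)}⟫, and Fv = ⟪{(xyx, xyx²), (x²y², y²x²), (x²y, x²yx), (xyrxy, yxrxy)}⟫. -/

import Mathlib

/-!
On the level of equational theories the two sides are `(θ_C ∨ θ_B) ∩ θ_F` and `(θ_C ∩ θ_F) ∨ θ_B`.
Since `θ_B ⊆ θ_F`, the inequality is the modular one. It is strict because the identity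
`xyx ≈ xyx²` separates the sides. It is one of the identities defining `F`, and it holds in every
commutative monoid with `x² ≈ x³`, so it holds in the smaller variety. It fails in the larger one
because `xyx` is an isoterm there, that is, no other word is equal to it in that variety.

To see the latter, consider the syntactic congruence `isoCon`: `u` and `v` are related when, for
every substitution `f` and every context `p, q`, one has `p f(u) q = xyx` iff `p f(v) q = xyx`.
It is fully invariant. It contains `x² ≈ x³` because `xyx` has no nonempty square factor. It
contains `θ_C ∩ θ_F` (`eq_xyx`): if `w` is related to `xyx` by `θ_C`, then counting
occurrences up to `3` (`count_eq_of_Cv`) shows that `w` is one of `xxy`, `xyx`, `yxx`; and a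
seven-element monoid `M7` in the variety `F` takes distinct values on these three words.
-/

/-- The free monoid over a countably infinite alphabet. -/
abbrev F : Type := FreeMonoid ℕ

/-- A congruence on the free monoid is fully invariant if it is stable
under every monoid endomorphism. -/
def IsFullyInvariant (c : Con F) : Prop :=
  ∀ f : F →* F, ∀ u v : F, c u v → c (f u) (f v)

/-- The type of fully invariant congruences on `F`. -/
abbrev FICon : Type := {c : Con F // IsFullyInvariant c}

/-- The smallest fully invariant congruence containing a set of pairs of words. -/
def fiGen (S : Set (F × F)) : Con F :=
  sInf {c : Con F | IsFullyInvariant c ∧ ∀ p ∈ S, c p.1 p.2}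

lemma fiGen_apply (S : Set (F × F)) (u v : F) :
    fiGen S u v ↔ ∀ c : Con F, (IsFullyInvariant c ∧ ∀ p ∈ S, c p.1 p.2) → c u v :=
  ⟨fun h c hc => h c hc, fun h c hc => h c hc⟩

lemma isFullyInvariant_fiGen (S : Set (F × F)) : IsFullyInvariant (fiGen S) := by
  intro f u v h
  rw [fiGen_apply] at h ⊢
  exact fun c hc => hc.1 f u v (h c hc)

/-- The fully invariant closure of a congruence, as an element of `FICon`. -/
def fiCl (c : Con F) : FICon :=
  ⟨fiGen {p | c p.1 p.2}, isFullyInvariant_fiGen _⟩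

lemma le_fiCl (c : Con F) : c ≤ (fiCl c).val := by
  refine le_sInf fun b hb => ?_
  rw [Con.le_def]
  exact fun {u v} huv => hb.2 (u, v) huv

lemma fiGC : GaloisConnection fiCl (Subtype.val : FICon → Con F) := by
  intro c d
  constructor
  · exact fun h => le_trans (le_fiCl c) h
  · intro h
    have hle : (fiCl c).val ≤ d.val :=
      sInf_le ⟨d.2, fun p hp => (Con.le_def.mp h) hp⟩
    exact hle

/-- The Galois insertion between congruences and fully invariant congruences. -/
def fiGI : GaloisInsertion fiCl (Subtype.val : FICon → Con F) :=
  fiGC.toGaloisInsertion fun d => le_fiCl d.val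

noncomputable instance : CompleteLattice FICon := fiGI.liftCompleteLattice

/-- The lattice of monoid varieties: the order dual of the lattice of fully
invariant congruences on the free monoid `F`. -/
abbrev MON : Type := FIConᵒᵈ

/-- The monoid variety given by the identity system `S`. -/
def gen (S : Set (F × F)) : MON :=
  OrderDual.toDual ⟨fiGen S, isFullyInvariant_fiGen S⟩

/-- The fully invariant congruence (equational theory) of a monoid variety. -/
def theta (V : MON) : Con F := (OrderDual.ofDual V).val

/-- Fixed pairwise distinct letters. -/
def x : F := FreeMonoid.of 0
def y : F := FreeMonoid.of 1
def z : F := FreeMonoid.of 2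
def r : F := FreeMonoid.of 3

/-- The content of a word: the set of letters occurring in it. -/
def con (w : F) : Set ℕ := {a | a ∈ FreeMonoid.toList w}

/-- The set of letters that are simple in a word (occur exactly once). -/
def simpleIn (w : F) : Set ℕ := {a | (FreeMonoid.toList w).count a = 1}

/-- Neutral element of a lattice. -/
def IsNeutralElt {L : Type*} [Lattice L] (a : L) : Prop :=
  ∀ y z : L, (a ⊔ y) ⊓ (y ⊔ z) ⊓ (z ⊔ a) = (a ⊓ y) ⊔ (y ⊓ z) ⊔ (z ⊓ a)

/-- Costandard element of a lattice. -/
def IsCostandardElt {L : Type*} [Lattice L] (a : L) : Prop :=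
  ∀ y z : L, (a ⊓ y) ⊔ z = (a ⊔ z) ⊓ (y ⊔ z)

/-- Codistributive element of a lattice. -/
def IsCodistributiveElt {L : Type*} [Lattice L] (a : L) : Prop :=
  ∀ y z : L, a ⊓ (y ⊔ z) = (a ⊓ y) ⊔ (a ⊓ z)

/-- Modular element of a lattice. -/
def IsModularElt {L : Type*} [Lattice L] (a : L) : Prop :=
  ∀ y z : L, y ≤ z → (a ⊔ y) ⊓ z = (a ⊓ z) ⊔ y

/-- Upper-modular element of a lattice. -/
def IsUpperModularElt {L : Type*} [Lattice L] (a : L) : Prop :=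
  ∀ y z : L, y ≤ a → a ⊓ (y ⊔ z) = y ⊔ (a ⊓ z)

/-- Lower-modular element of a lattice. -/
def IsLowerModularElt {L : Type*} [Lattice L] (a : L) : Prop :=
  ∀ y z : L, a ≤ y → a ⊔ (y ⊓ z) = y ⊓ (a ⊔ z)

/-- The variety `SL` of semilattice monoids. -/
def SLv : MON := gen {(x*x, x), (x*y, y*x)}

/-- The variety `C₂`. -/
def C2v : MON := gen {(x*x, x*x*x), (x*y, y*x)}

/-- The variety `Cₙ`. -/
def Cv (n : ℕ) : MON := gen {(x^n, x^(n+1)), (x*y, y*x)}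

/-- The variety `Aₙ` of Abelian groups of exponent dividing `n`. -/
def Av (n : ℕ) : MON := gen {(x^n, 1), (x*y, y*x)}

/-- The variety `D`. -/
def Dv : MON := gen {(x*x, x*x*x), (x*x*y, x*y*x), (x*y*x, y*x*x)}

/-- The variety `B₂,₃`. -/
def Bv : MON := gen {(x*x, x*x*x)}

/-- The word `s = yxyzxz`. -/
def s : F := y*x*y*z*x*z

/-- The word `t = yxzxyxz`. -/
def t : F := y*x*z*x*y*x*z

/-- The variety `Q`. -/
def Qv : MON := gen {(s, t)}

/-- The variety `F` (denoted `Fv` to avoid a clash with the free monoid). -/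
def Fv : MON :=
  gen {(x*y*x, x*y*x*x), (x*x*y*y, y*y*x*x), (x*x*y, x*x*y*x), (x*y*r*x*y, y*x*r*x*y)}

/-! ### Identities of a monoid -/

/-- The fully invariant congruence of all identities that hold in the monoid `M`. -/
def idCon (M : Type) [Monoid M] : Con F where
  r u v := ∀ f : F →* M, f u = f v
  iseqv := ⟨fun _ _ => rfl, fun h f => (h f).symm, fun h k f => (h f).trans (k f)⟩
  mul' h k f := by rw [map_mul, map_mul, h f, k f]

lemma idCon_fi (M : Type) [Monoid M] : IsFullyInvariant (idCon M) :=
  fun g _ _ h f => h (f.comp g)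

lemma theta_mono {V W : MON} (h : V ≤ W) {u v : F} (huv : theta W u v) : theta V u v :=
  Con.le_def.mp (show theta W ≤ theta V from h) huv

lemma le_gen {V : MON} {S : Set (F × F)} (h : ∀ p ∈ S, theta V p.1 p.2) : V ≤ gen S := by
  change fiGen S ≤ theta V
  exact sInf_le ⟨(OrderDual.ofDual V).2, h⟩

lemma theta_gen {S : Set (F × F)} {p : F × F} (h : p ∈ S) : theta (gen S) p.1 p.2 :=
  (fiGen_apply S _ _).2 fun _ hc => hc.2 p h

/-- Identities derivable from `S` hold in every monoid that satisfies `S`. -/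
lemma map_eq_of_gen {M : Type} [Monoid M] {S : Set (F × F)}
    (hS : ∀ p ∈ S, ∀ f : F →* M, f p.1 = f p.2) {u v : F} (h : theta (gen S) u v)
    (f : F →* M) : f u = f v :=
  (fiGen_apply S u v).1 h (idCon M) ⟨idCon_fi M, hS⟩ f

/-! ### A monoid in the variety `F` -/

/-- The monoid `{1, a, a², b, ab, a²b, 0}` with `a³ = a²`, `ba = b`, `b² = 0`. The element `aⁱ` is
`some (i, false)`, the element `aⁱb` is `some (i, true)`, and `0` is `none`. -/
def M7 : Type := Option (Fin 3 × Bool)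

instance : DecidableEq M7 := inferInstanceAs (DecidableEq (Option (Fin 3 × Bool)))
instance : Fintype M7 := inferInstanceAs (Fintype (Option (Fin 3 × Bool)))

/-- Addition of natural numbers at most `2`, truncated at `2`. -/
def addTwo (i j : Fin 3) : Fin 3 := ⟨min (i.val + j.val) 2, by omega⟩

/-- Multiplication of `M7`. -/
def mulM7 : M7 → M7 → M7
  | some (i, false), some (j, c) => some (addTwo i j, c)
  | some (i, true), some (_, false) => some (i, true)
  | _, _ => none

set_option maxRecDepth 100000 in
instance : Monoid M7 where
  mul := mulM7
  one := some (0, false)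
  mul_assoc := by decide
  one_mul := by decide
  mul_one := by decide

set_option maxRecDepth 100000 in
lemma map_eq_of_Fv {u v : F} (h : theta Fv u v) (f : F →* M7) : f u = f v := by
  refine map_eq_of_gen ?_ h f
  have h1 : ∀ a b : M7, a * b * a = a * b * a * a := by decide
  have h2 : ∀ a b : M7, a * a * b * b = b * b * a * a := by decide
  have h3 : ∀ a b : M7, a * a * b = a * a * b * a := by decide
  have h4 : ∀ a b c : M7, a * b * c * a * b = b * a * c * a * b := by decide
  rintro p (rfl | rfl | rfl | rfl) g <;> simp only [map_mul]
  · exact h1 _ _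
  · exact h2 _ _
  · exact h3 _ _
  · exact h4 _ _ _

/-! ### Counting occurrences up to three -/

/-- The additive monoid `{0, 1, 2, 3}` with truncation at `3`, written multiplicatively. -/
def T4 : Type := Fin 4

instance : DecidableEq T4 := inferInstanceAs (DecidableEq (Fin 4))
instance : Fintype T4 := inferInstanceAs (Fintype (Fin 4))

/-- Truncation of a natural number at `3`. -/
def trunc (k : ℕ) : T4 := (⟨min k 3, by omega⟩ : Fin 4)

set_option maxRecDepth 100000 in
instance : CommMonoid T4 where
  mul i j := trunc (Fin.val i + Fin.val j)
  one := trunc 0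
  mul_assoc := by decide
  one_mul := by decide
  mul_one := by decide
  mul_comm := by decide

lemma trunc_add (j k : ℕ) : trunc (j + k) = trunc j * trunc k := by
  apply Fin.ext
  change min (j + k) 3 = min (min j 3 + min k 3) 3
  omega

/-- The homomorphism counting the occurrences of the letter `a`, up to `3`. -/
def countHom (a : ℕ) : F →* T4 := FreeMonoid.lift fun i => trunc (if i = a then 1 else 0)

lemma countHom_apply (a : ℕ) (w : F) :
    countHom a w = trunc ((FreeMonoid.toList w).count a) := by
  induction w using FreeMonoid.inductionOn' with
  | one => rfl
  | of_mul i w ih =>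
    rw [map_mul, ih, countHom, FreeMonoid.lift_eval_of, ← trunc_add]
    simp [FreeMonoid.toList_mul, FreeMonoid.toList_of, List.count_cons, add_comm]

lemma count_eq_of_Cv {n : ℕ} (hn : 3 ≤ n) {u v : F} (h : theta (Cv n) u v) (a : ℕ)
    (hu : (FreeMonoid.toList u).count a < 3) :
    (FreeMonoid.toList v).count a = (FreeMonoid.toList u).count a := by
  have key : countHom a u = countHom a v := by
    refine map_eq_of_gen ?_ h _
    have h3 : ∀ t : T4, t ^ 3 * t = t ^ 3 := by decide
    rintro p (rfl | rfl) g
    · obtain ⟨m, rfl⟩ := Nat.exists_eq_add_of_le hn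
      simp only [map_pow]
      rw [pow_succ, pow_add, mul_right_comm, h3]
    · simp only [map_mul, mul_comm]
  rw [countHom_apply, countHom_apply] at key
  have := congrArg (Fin.val (n := 4)) key
  change min _ 3 = min _ 3 at this
  omega

/-! ### The word `xyx` is an isoterm -/

/-- Only `xyx` itself is related to `xyx` by both `θ_C` and `θ_F`. -/
lemma eq_xyx {n : ℕ} (hn : 3 ≤ n) {w : F} (hC : theta (Cv n) (x * y * x) w)
    (hF : theta Fv (x * y * x) w) : w = x * y * x := by
  have hcount : ∀ a, (FreeMonoid.toList w).count a = ([0, 1, 0] : List ℕ).count a := by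
    intro a
    refine count_eq_of_Cv hn hC a ?_
    change ([0, 1, 0] : List ℕ).count a < 3
    simp only [List.count_cons, List.count_nil, beq_iff_eq]
    split_ifs <;> omega
  have hmem := List.mem_permutations'.2 (List.perm_iff_count.2 hcount)
  have hlist : FreeMonoid.toList w = [0, 0, 1] ∨ FreeMonoid.toList w = [0, 1, 0] ∨
      FreeMonoid.toList w = [1, 0, 0] := by
    have hall : ∀ l ∈ List.permutations' [0, 1, 0],
        l = [0, 0, 1] ∨ l = [0, 1, 0] ∨ l = [1, 0, 0] := by decide
    exact hall _ hmem
  have hM := map_eq_of_Fv hF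
    (FreeMonoid.lift fun i => if i = 0 then (some (1, false) : M7) else some (0, true))
  rcases hlist with h | h | h
  · obtain rfl : w = FreeMonoid.ofList [0, 0, 1] := h
    exact absurd hM (by decide)
  · exact h
  · obtain rfl : w = FreeMonoid.ofList [1, 0, 0] := h
    exact absurd hM (by decide)

/-- The largest fully invariant congruence for which the class of `xyx` is a singleton. -/
def isoCon : Con F where
  r u v := ∀ (f : F →* F) (p q : F), p * f u * q = x * y * x ↔ p * f v * q = x * y * x
  iseqv := ⟨fun _ _ _ _ => Iff.rfl, fun h f p q => (h f p q).symm,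
    fun h k f p q => (h f p q).trans (k f p q)⟩
  mul' {a b c d} h k f p q := by
    have h1 := h f p (f c * q)
    have h2 := k f (p * f b) q
    simp only [map_mul, mul_assoc] at h1 h2 ⊢
    exact h1.trans h2

lemma isoCon_fi : IsFullyInvariant isoCon := fun g _ _ h f => h (f.comp g)

/-- The variety with equational theory `isoCon`. -/
def isoVar : MON := OrderDual.toDual ⟨isoCon, isoCon_fi⟩

lemma isoVar_le_sup {n : ℕ} (hn : 3 ≤ n) : isoVar ≤ Cv n ⊔ Fv := by
  -- Being fully invariant and compatible, the theory of the join passes to `p * f u * q`.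
  have key : ∀ u v : F, theta (Cv n ⊔ Fv) u v → ∀ (f : F →* F) (p q : F),
      p * f u * q = x * y * x → p * f v * q = x * y * x := by
    intro u v h f p q hu
    have h1 : theta (Cv n ⊔ Fv) (f u) (f v) := (OrderDual.ofDual (Cv n ⊔ Fv)).2 f u v h
    have h2 := (theta (Cv n ⊔ Fv)).mul
      ((theta (Cv n ⊔ Fv)).mul ((theta (Cv n ⊔ Fv)).refl p) h1) ((theta (Cv n ⊔ Fv)).refl q)
    rw [hu] at h2
    exact eq_xyx hn (theta_mono le_sup_left h2) (theta_mono le_sup_right h2)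
  change theta (Cv n ⊔ Fv) ≤ isoCon
  rw [Con.le_def]
  intro u v h f p q
  exact ⟨key u v h f p q, key v u ((theta (Cv n ⊔ Fv)).symm h) f p q⟩

/-- The word `xyx` has no nonempty square factor. -/
lemma square_free (L P Q : List ℕ) (h : P ++ (L ++ (L ++ Q)) = [0, 1, 0]) : L = [] := by
  rcases L with _ | ⟨c, _ | ⟨d, L⟩⟩
  · rfl
  · have hlen := congrArg List.length h
    rcases P with _ | ⟨a, _ | ⟨b, P⟩⟩
    · grind
    · grind
    · simp at hlen
      omega
  · have := congrArg List.length h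
    simp at this
    omega

lemma isoVar_le_Bv : isoVar ≤ Bv := by
  refine le_gen ?_
  rintro p rfl f p q
  have key : ∀ g q' : F, p * (g * (g * q')) = x * y * x → g = 1 := fun g q' h =>
    square_free (FreeMonoid.toList g) (FreeMonoid.toList p) (FreeMonoid.toList q') h
  simp only [map_mul]
  constructor
  · intro h
    have := key (f x) q (by simpa only [mul_assoc] using h)
    simpa [this] using h
  · intro h
    have := key (f x) (f x * q) (by simpa only [mul_assoc] using h)
    simpa [this] using h

/-! ### The two sides -/

lemma Fv_le_Bv : Fv ≤ Bv := by
  refine le_gen ?_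
  rintro p rfl
  have h : theta Fv (x * y * x) (x * y * x * x) :=
    theta_gen (p := (x * y * x, x * y * x * x)) (Or.inl rfl)
  -- Erasing `y` turns `xyx ≈ xyx²` into `x² ≈ x³`.
  exact (OrderDual.ofDual Fv).2
    (FreeMonoid.lift fun i => if i = 0 then x else 1) _ _ h

lemma lhs_le_gen (n : ℕ) : (Cv n ⊓ Bv) ⊔ Fv ≤ gen {(x * y * x, x * y * x * x)} := by
  refine sup_le (le_gen ?_) (le_gen ?_)
  · rintro p rfl
    have hB : theta (Cv n ⊓ Bv) (x * x) (x * x * x) :=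
      theta_mono inf_le_right (theta_gen (p := (x * x, x * x * x)) rfl)
    have hC : theta (Cv n ⊓ Bv) (x * y) (y * x) :=
      theta_mono inf_le_left (theta_gen (p := (x * y, y * x)) (Or.inr rfl))
    generalize theta (Cv n ⊓ Bv) = c at hB hC ⊢
    rw [← Con.eq] at hB hC ⊢
    simp only [Con.coe_mul] at hB hC ⊢
    rw [hC, mul_assoc, mul_assoc, mul_assoc, ← mul_assoc (x : c.Quotient), ← hB]
  · rintro p rfl
    exact theta_gen (p := (x * y * x, x * y * x * x)) (Or.inl rfl)

theorem statement11 (n : ℕ) (hn : 3 ≤ n) :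
    (Cv n ⊓ Bv) ⊔ Fv < (Cv n ⊔ Fv) ⊓ Bv := by
  refine lt_of_le_not_ge ?_ fun h => ?_
  · exact sup_le (le_inf (inf_le_left.trans le_sup_left) inf_le_right)
      (le_inf le_sup_right Fv_le_Bv)
  · have hle := (le_inf (isoVar_le_sup hn) isoVar_le_Bv).trans (h.trans (lhs_le_gen n))
    have hiso : theta isoVar (x * y * x) (x * y * x * x) :=
      theta_mono hle (theta_gen (p := (x * y * x, x * y * x * x)) rfl)
    have heq := (hiso (MonoidHom.id F) 1 1).1 rfl
    exact absurd (congrArg FreeMonoid.length heq) (by decide)
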